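/- arXiv:2509.13501 — 2 statements merged into one kernel-verified Lean document; each statement's English description precedes it below -/
import Mathlib

section
/- (One-step robust reachability.) Let r = p_LA − p_k − t_s·v_k with r ≠ 0, ê = r/‖r‖, u_req = (2/t_s²)·‖r‖, and σ = 2·ε_p/t_s + ε_v. If |u_req| ≤ a_max − σ, then for every pair of noise vectors n_p, n_v ∈ ℝ³ with ‖n_p‖ ≤ ε_p and ‖n_v‖ ≤ ε_v, there exists η ∈ ℝ with |η| ≤ σ such that the command u = (u_req + η)·ê satisfies ‖u‖ ≤ a_max and cancels the axial one-step error: ⟨ê, r − (t_s²/2)·u − t_s·n_p − (t_s²/2)·n_v⟩ = 0. -/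
open scoped RealInnerProductSpace

/-!
The noises enter the one-step error only through the acceleration disturbance
`w = (2 / t) • n_p + n_v`: the error is `r - (t ^ 2 / 2) • (u + w)`, and `‖w‖ ≤ σ`. With `e` the
unit vector along `r`, the noise-free command `u_req` accounts for the axial component of `r`, so
`η = -⟪e, w⟫` cancels what remains, and `|η| ≤ ‖w‖ ≤ σ` by Cauchy-Schwarz. The triangle inequality
then keeps the command within `u_req + σ ≤ a_max`.
-/

section OneStepError

variable {E : Type*}

section Module

variable [AddCommGroup E] [Module ℝ E]

/-- The error `e_p` of the position after one sampling period `t` under the command `u`, where `r`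
is the displacement from the zero-input prediction to the look-ahead point, `n_p` the noise in
the velocity and `n_v` the noise in the acceleration. -/
noncomputable def oneStepError (t : ℝ) (r u n_p n_v : E) : E :=
  r - (t ^ 2 / 2) • u - t • n_p - (t ^ 2 / 2) • n_v

/-- The acceleration disturbance that, held over one sampling period `t`, displaces the position
as much as `n_p` and `n_v` do together. -/
noncomputable def accelDisturbance (t : ℝ) (n_p n_v : E) : E :=
  (2 / t) • n_p + n_v

theorem oneStepError_eq_sub_smul_add_accelDisturbance {t : ℝ} (ht : t ≠ 0) (r u n_p n_v : E) :
    oneStepError t r u n_p n_v = r - (t ^ 2 / 2) • (u + accelDisturbance t n_p n_v) := by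
  have scale : t ^ 2 / 2 * (2 / t) = t := by field_simp
  rw [oneStepError, accelDisturbance, smul_add, smul_add, smul_smul, scale]
  abel

end Module

theorem norm_accelDisturbance_le [SeminormedAddCommGroup E] [NormedSpace ℝ E]
    {t ε_p ε_v : ℝ} (ht : 0 < t) {n_p n_v : E} (hp : ‖n_p‖ ≤ ε_p) (hv : ‖n_v‖ ≤ ε_v) :
    ‖accelDisturbance t n_p n_v‖ ≤ 2 * ε_p / t + ε_v :=
  calc ‖(2 / t) • n_p + n_v‖
      ≤ ‖(2 / t) • n_p‖ + ‖n_v‖ := norm_add_le _ _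
    _ = 2 / t * ‖n_p‖ + ‖n_v‖ := by rw [norm_smul_of_nonneg (by positivity)]
    _ ≤ 2 / t * ε_p + ε_v := by gcongr
    _ = 2 * ε_p / t + ε_v := by rw [div_mul_eq_mul_div]

end OneStepError

section UnitVector

variable {E : Type*} [SeminormedAddCommGroup E]

theorem norm_add_smul_le_of_norm_eq_one [NormedSpace ℝ E] {e : E} (he : ‖e‖ = 1)
    {a η σ M : ℝ} (hη : |η| ≤ σ) (ha : |a| ≤ M - σ) : ‖(a + η) • e‖ ≤ M :=
  calc ‖(a + η) • e‖
      = |a + η| := by rw [norm_smul, he, mul_one, Real.norm_eq_abs]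
    _ ≤ |a| + |η| := abs_add_le a η
    _ ≤ M := by linarith

variable [InnerProductSpace ℝ E]

theorem abs_real_inner_le_norm_of_norm_eq_one {e : E} (he : ‖e‖ = 1) (x : E) :
    |⟪e, x⟫| ≤ ‖x‖ := by
  simpa only [he, one_mul] using abs_real_inner_le_norm e x

theorem real_inner_inv_norm_smul_self (x : E) : ⟪‖x‖⁻¹ • x, x⟫ = ‖x‖ := by
  rw [real_inner_smul_self_left, ← mul_assoc, inv_mul_mul_self]

theorem real_inner_sub_smul_smul_add_eq_zero {e : E} (he : ‖e‖ = 1) {c a : ℝ} {r : E}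
    (ha : c * a = ⟪e, r⟫) (w : E) : ⟪e, r - c • ((a + -⟪e, w⟫) • e + w)⟫ = 0 := by
  have inner_self : ⟪e, e⟫ = 1 := by rw [real_inner_self_eq_norm_sq, he, one_pow]
  rw [inner_sub_right, real_inner_smul_right, inner_add_right, real_inner_smul_right, inner_self,
    ← ha]
  ring

end UnitVector

theorem one_step_robust_reachability_general
    {E : Type*} [NormedAddCommGroup E] [InnerProductSpace ℝ E]
    {t_s : ℝ} (ht : 0 < t_s) {a_max ε_p ε_v : ℝ} {r : E} (hr : r ≠ 0)
    {ehat : E} (he : ehat = ‖r‖⁻¹ • r) {u_req σ : ℝ}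
    (hu_req : u_req = (2 / t_s ^ 2) * ‖r‖)
    (hσ : σ = 2 * ε_p / t_s + ε_v)
    (hmargin : |u_req| ≤ a_max - σ)
    {n_p n_v : E} (hp : ‖n_p‖ ≤ ε_p) (hv : ‖n_v‖ ≤ ε_v) :
    ∃ η : ℝ, |η| ≤ σ ∧
      ‖(u_req + η) • ehat‖ ≤ a_max ∧
      ⟪ehat, oneStepError t_s r ((u_req + η) • ehat) n_p n_v⟫ = 0 := by
  have norm_ehat : ‖ehat‖ = 1 := he ▸ norm_smul_inv_norm (𝕜 := ℝ) hr
  have axial_demand : t_s ^ 2 / 2 * u_req = ⟪ehat, r⟫ := by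
    rw [he, real_inner_inv_norm_smul_self, hu_req]
    field_simp
  have abs_correction : |-⟪ehat, accelDisturbance t_s n_p n_v⟫| ≤ σ := by
    rw [abs_neg, hσ]
    exact (abs_real_inner_le_norm_of_norm_eq_one norm_ehat _).trans
      (norm_accelDisturbance_le ht hp hv)
  refine ⟨-⟪ehat, accelDisturbance t_s n_p n_v⟫, abs_correction,
    norm_add_smul_le_of_norm_eq_one norm_ehat abs_correction hmargin, ?_⟩
  rw [oneStepError_eq_sub_smul_add_accelDisturbance ht.ne']
  exact real_inner_sub_smul_smul_add_eq_zero norm_ehat axial_demand _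

/-- One-step robust reachability (Theorem 1): with `r = p_LA - p_k - t_s • v_k ≠ 0`,
`ê = r/‖r‖`, `u_req = (2/t_s²) ‖r‖`, and `σ = 2 ε_p / t_s + ε_v`, if
`|u_req| ≤ a_max - σ`, then for all admissible noises there is an axial
adjustment `η` with `|η| ≤ σ` such that `u = (u_req + η) • ê` satisfies
`‖u‖ ≤ a_max` and cancels the axial one-step error. -/
theorem one_step_robust_reachability
    (t_s : ℝ) (ht : 0 < t_s)
    (a_max : ℝ) (ha : 0 < a_max)
    (ε_p ε_v : ℝ) (hεp : 0 ≤ ε_p) (hεv : 0 ≤ ε_v)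
    (p_k v_k p_LA : EuclideanSpace ℝ (Fin 3))
    (r : EuclideanSpace ℝ (Fin 3)) (hr_def : r = p_LA - p_k - t_s • v_k)
    (hr : r ≠ 0)
    (ehat : EuclideanSpace ℝ (Fin 3)) (he : ehat = ‖r‖⁻¹ • r)
    (u_req σ : ℝ)
    (hu_req : u_req = (2 / t_s ^ 2) * ‖r‖)
    (hσ : σ = 2 * ε_p / t_s + ε_v)
    (hmargin : |u_req| ≤ a_max - σ) :
    ∀ n_p n_v : EuclideanSpace ℝ (Fin 3),
      ‖n_p‖ ≤ ε_p → ‖n_v‖ ≤ ε_v →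
      ∃ η : ℝ, |η| ≤ σ ∧
        ‖(u_req + η) • ehat‖ ≤ a_max ∧
        ⟪ehat, r - (t_s ^ 2 / 2) • ((u_req + η) • ehat)
            - t_s • n_p - (t_s ^ 2 / 2) • n_v⟫ = 0 := by
  intro n_p n_v hp hv
  exact one_step_robust_reachability_general ht hr he hu_req hσ hmargin hp hv
end

section
/- (Monotone position/velocity trade-off in the weight.) Let u*(C) = (r + (2C/t_s)·d)/((1/2)·t_s² + 2C) and define φ(C) = ‖r − (t_s²/2)·u*(C)‖ and ψ(C) = ‖d − t_s·u*(C)‖ for C ≥ 0. If 2·r ≠ t_s·d, then φ is strictly increasing on [0, ∞) and ψ is strictly decreasing on [0, ∞); moreover φ(0) = 0. -/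
/-!
Both residuals move along a fixed direction: with `q(C) = a² + C b²`, the minimizer of
`‖r - a • u‖² + C ‖d - b • u‖²` leaves the residuals `(C / q(C)) • b • (b • r - a • d)` and
`q(C)⁻¹ • a • (a • d - b • r)`. Their norms inherit the monotonicity of `C / q(C)` and `q(C)⁻¹`.
The kinematic model is the case `a = t² / 2`, `b = t`.
-/

section Minimizer

variable {𝕜 E : Type*} [Field 𝕜] [AddCommGroup E] [Module 𝕜 E]

/-- The solution `u` of the normal equation `(a² + C b²) • u = a • r + (C b) • d`. In a real inner
product space it is the minimizer of the tracking cost `‖r - a • u‖² + C ‖d - b • u‖²` whenever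
`a ≠ 0` and `0 ≤ C`. It is `0` by convention when `a² + C b² = 0`. -/
def trackingMinimizer (a b : 𝕜) (r d : E) (C : 𝕜) : E :=
  (a ^ 2 + C * b ^ 2)⁻¹ • (a • r + (C * b) • d)

theorem smul_trackingMinimizer {a b C : 𝕜} (hq : a ^ 2 + C * b ^ 2 ≠ 0) (r d : E) :
    (a ^ 2 + C * b ^ 2) • trackingMinimizer a b r d C = a • r + (C * b) • d :=
  smul_inv_smul₀ hq _

theorem left_sub_smul_trackingMinimizer {a b C : 𝕜} (hq : a ^ 2 + C * b ^ 2 ≠ 0) (r d : E) :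
    r - a • trackingMinimizer a b r d C =
      (C / (a ^ 2 + C * b ^ 2)) • b • (b • r - a • d) := by
  rw [div_eq_inv_mul, mul_smul, eq_inv_smul_iff₀ hq, smul_sub, smul_comm _ a,
    smul_trackingMinimizer hq]
  module

theorem right_sub_smul_trackingMinimizer {a b C : 𝕜} (hq : a ^ 2 + C * b ^ 2 ≠ 0) (r d : E) :
    d - b • trackingMinimizer a b r d C =
      (a ^ 2 + C * b ^ 2)⁻¹ • a • (a • d - b • r) := by
  rw [eq_inv_smul_iff₀ hq, smul_sub, smul_comm _ b, smul_trackingMinimizer hq]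
  module

theorem trackingMinimizer_half_sq [NeZero (2 : 𝕜)] {t : 𝕜} (ht : t ≠ 0) (r d : E) (C : 𝕜) :
    trackingMinimizer (t ^ 2 / 2) t r d C =
      ((1 / 2) * t ^ 2 + 2 * C)⁻¹ • (r + (2 * C / t) • d) := by
  have h2 : (2 : 𝕜) ≠ 0 := two_ne_zero
  have hq : (t ^ 2 / 2) ^ 2 + C * t ^ 2 = (t ^ 2 / 2) * ((1 / 2) * t ^ 2 + 2 * C) := by
    field_simp
  have hv : (t ^ 2 / 2) • r + (C * t) • d = (t ^ 2 / 2) • (r + (2 * C / t) • d) := by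
    match_scalars <;> field_simp
  rw [trackingMinimizer, hq, hv, mul_inv_rev, mul_smul, inv_smul_smul₀ (by positivity)]

theorem smul_ne_half_sq_smul [NeZero (2 : 𝕜)] {t : 𝕜} (ht : t ≠ 0) {r d : E}
    (hrd : (2 : 𝕜) • r ≠ t • d) : t • r ≠ (t ^ 2 / 2) • d := by
  have h2 : (2 : 𝕜) ≠ 0 := two_ne_zero
  have hr : t • r = (t / 2) • (2 : 𝕜) • r := by match_scalars; field_simp
  have hd : (t ^ 2 / 2) • d = (t / 2) • t • d := by match_scalars; field_simp
  rw [hr, hd]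
  exact (smul_right_injective E (div_ne_zero ht h2)).ne hrd

end Minimizer

section Weights

variable {𝕜 : Type*} [Field 𝕜] [LinearOrder 𝕜] [IsStrictOrderedRing 𝕜] {p q : 𝕜}

theorem strictMonoOn_div_add_mul (hp : 0 < p) (hq : 0 ≤ q) :
    StrictMonoOn (fun x ↦ x / (p + x * q)) (Set.Ici 0) := by
  intro x (hx : 0 ≤ x) y (hy : 0 ≤ y) hxy
  have hcross : x * (p + y * q) < y * (p + x * q) := by
    linarith [mul_lt_mul_of_pos_right hxy hp]
  exact (div_lt_div_iff₀ (by positivity) (by positivity)).2 hcross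

theorem strictAntiOn_inv_add_mul (hp : 0 < p) (hq : 0 < q) :
    StrictAntiOn (fun x ↦ (p + x * q)⁻¹) (Set.Ici 0) := by
  intro x (hx : 0 ≤ x) y _ hxy
  exact inv_strictAnti₀ (by positivity) (by gcongr)

end Weights

section Norm

variable {E : Type*} [NormedAddCommGroup E] [NormedSpace ℝ E]

theorem strictMonoOn_norm_smul_const {α : Type*} [Preorder α] {f : α → ℝ} {s : Set α}
    (hf : StrictMonoOn f s) (hf₀ : ∀ x ∈ s, 0 ≤ f x) {v : E} (hv : v ≠ 0) :
    StrictMonoOn (fun x ↦ ‖f x • v‖) s := by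
  intro x hx y hy hxy
  simp only [norm_smul, Real.norm_of_nonneg, hf₀ x hx, hf₀ y hy]
  exact mul_lt_mul_of_pos_right (hf hx hy hxy) (norm_pos_iff.2 hv)

theorem strictAntiOn_norm_smul_const {α : Type*} [Preorder α] {f : α → ℝ} {s : Set α}
    (hf : StrictAntiOn f s) (hf₀ : ∀ x ∈ s, 0 ≤ f x) {v : E} (hv : v ≠ 0) :
    StrictAntiOn (fun x ↦ ‖f x • v‖) s :=
  (strictMonoOn_norm_smul_const hf.dual_left hf₀ hv).dual_left

variable {a b : ℝ} {r d : E}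

theorem strictMonoOn_norm_left_sub_smul_trackingMinimizer (ha : a ≠ 0) (hb : b ≠ 0)
    (hrd : b • r ≠ a • d) :
    StrictMonoOn (fun C ↦ ‖r - a • trackingMinimizer a b r d C‖) (Set.Ici 0) := by
  have hmono := strictMonoOn_norm_smul_const
    (strictMonoOn_div_add_mul (p := a ^ 2) (q := b ^ 2) (by positivity) (by positivity))
    (fun C (hC : 0 ≤ C) ↦ by positivity) (smul_ne_zero hb (sub_ne_zero.2 hrd))
  refine hmono.congr fun C (hC : 0 ≤ C) ↦ ?_
  exact congrArg norm (left_sub_smul_trackingMinimizer (by positivity) r d).symm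

theorem strictAntiOn_norm_right_sub_smul_trackingMinimizer (ha : a ≠ 0) (hb : b ≠ 0)
    (hrd : b • r ≠ a • d) :
    StrictAntiOn (fun C ↦ ‖d - b • trackingMinimizer a b r d C‖) (Set.Ici 0) := by
  have hanti := strictAntiOn_norm_smul_const
    (strictAntiOn_inv_add_mul (p := a ^ 2) (q := b ^ 2) (by positivity) (by positivity))
    (fun C (hC : 0 ≤ C) ↦ by positivity) (smul_ne_zero ha (sub_ne_zero.2 hrd.symm))
  refine hanti.congr fun C (hC : 0 ≤ C) ↦ ?_
  exact congrArg norm (right_sub_smul_trackingMinimizer (by positivity) r d).symm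

theorem residual_tradeoff_monotone_general (ha : a ≠ 0) (hb : b ≠ 0) (hrd : b • r ≠ a • d) :
    StrictMonoOn (fun C ↦ ‖r - a • trackingMinimizer a b r d C‖) (Set.Ici 0) ∧
      StrictAntiOn (fun C ↦ ‖d - b • trackingMinimizer a b r d C‖) (Set.Ici 0) ∧
      ‖r - a • trackingMinimizer a b r d 0‖ = 0 := by
  refine ⟨strictMonoOn_norm_left_sub_smul_trackingMinimizer ha hb hrd,
    strictAntiOn_norm_right_sub_smul_trackingMinimizer ha hb hrd, ?_⟩
  rw [left_sub_smul_trackingMinimizer (by positivity), zero_div, zero_smul, norm_zero]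

end Norm

/-- Monotone position/velocity trade-off in the weight: with
`u*(C) = (r + (2C/t_s) • d)/((1/2) t_s² + 2C)`,
`φ(C) = ‖r - (t_s²/2) • u*(C)‖` and `ψ(C) = ‖d - t_s • u*(C)‖`, if
`2 • r ≠ t_s • d` then `φ` is strictly increasing and `ψ` strictly decreasing
on `[0, ∞)`, and `φ(0) = 0`. -/
theorem residual_tradeoff_monotone
    (t_s : ℝ) (ht : 0 < t_s)
    (r d : EuclideanSpace ℝ (Fin 3))
    (hrd : (2 : ℝ) • r ≠ t_s • d)
    (ustar : ℝ → EuclideanSpace ℝ (Fin 3))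
    (hustar : ∀ C : ℝ,
      ustar C = ((1 / 2) * t_s ^ 2 + 2 * C)⁻¹ • (r + (2 * C / t_s) • d))
    (φ ψ : ℝ → ℝ)
    (hφ : ∀ C : ℝ, φ C = ‖r - (t_s ^ 2 / 2) • ustar C‖)
    (hψ : ∀ C : ℝ, ψ C = ‖d - t_s • ustar C‖) :
    StrictMonoOn φ (Set.Ici 0) ∧ StrictAntiOn ψ (Set.Ici 0) ∧ φ 0 = 0 := by
  simpa only [funext hφ, funext hψ, hustar, trackingMinimizer_half_sq ht.ne'] using
    residual_tradeoff_monotone_general (a := t_s ^ 2 / 2) (by positivity) ht.ne'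
      (smul_ne_half_sq_smul ht.ne' hrd)
end
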